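/- Let D be a central division algebra of index k over a number field F, let Λ be a maximal O_F-order in D, and consider the Hey zeta function ζ_Λ(s) = Σ_{I} 1/[Λ:I]^s over right ideals I of Λ. Then for s ≥ 1 there exist constants N, T independent of M such that the truncated sum Σ_{I : [Λ:I] ≤ M} 1/[Λ:I]^s ≤ N·(log M)^T. -/

import Mathlib

/-!
The sum is controlled by the linear growth of the number of right ideals of index at most `N`:
partial summation then bounds it by a multiple of a harmonic sum.

For the linear growth, fix a `ℤ`-basis of the order `R`, of rank `d`. By the pigeonhole principle a
right ideal `I` of index `n` contains some `x ≠ 0` with coordinates at most `n ^ (1 / d)`. The index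
of `x R` is `|N(x)| = O(n)`, so `[I : x R]` is bounded and some integer `m ≠ 0` independent of `I`
satisfies `m I ⊆ x R`. Hence `m I = x K` with `m R ⊆ K ⊆ R`. This leaves finitely many `K`, and
`O(N)` elements `x` when `n ≤ N`.
-/

section Lattice

open Module

lemma exists_forall_abv_norm_le {R S T ι : Type*} [CommRing R] [Nontrivial R] [Ring S] [Algebra R S]
    [CommRing T] [LinearOrder T] [IsStrictOrderedRing T] [Fintype ι] (b : Basis ι R S)
    (abv : AbsoluteValue R T) :
    ∃ C : T, ∀ (x : S) (y : T), (∀ i, abv (b.repr x i) ≤ y) →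
      abv (Algebra.norm R x) ≤ C * y ^ Fintype.card ι := by
  classical
  obtain ⟨A, hA⟩ := Finite.bddAbove_range fun p : ι × ι × ι =>
    abv (Algebra.leftMulMatrix b (b p.1) p.2.1 p.2.2)
  refine ⟨(Fintype.card ι).factorial * (Fintype.card ι * A) ^ Fintype.card ι, fun x y hy => ?_⟩
  have hx : Algebra.leftMulMatrix b x = ∑ k, b.repr x k • Algebra.leftMulMatrix b (b k) := by
    conv_lhs => rw [← b.sum_repr x]
    simp only [map_sum, map_smul]
  rw [Algebra.norm_eq_matrix_det b, hx]
  refine (Matrix.det_sum_smul_le Finset.univ (fun k i j => hA ⟨(k, i, j), rfl⟩) hy).trans_eq ?_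
  simp only [Finset.card_univ, nsmul_eq_mul]
  ring

variable {A ι : Type*} [AddCommGroup A] [Fintype ι]

lemma index_range_eq_natAbs_det [Module.Free ℤ A] [Module.Finite ℤ A] {f : A →ₗ[ℤ] A}
    (hf : Function.Injective f) :
    f.range.toAddSubgroup.index = (LinearMap.det f).natAbs :=
  (Submodule.natAbs_det_equiv f.range (LinearEquiv.ofInjective f hf)).symm

lemma exists_mem_ne_zero_natAbs_repr_pow_le [Nonempty ι] (b : Basis ι ℤ A) {I : AddSubgroup A}
    (hI : I.index ≠ 0) :
    ∃ x ∈ I, x ≠ 0 ∧ ∀ i, (b.repr x i).natAbs ^ Fintype.card ι ≤ I.index := by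
  classical
  have : I.FiniteIndex := ⟨hI⟩
  have : Fintype (A ⧸ I) := Fintype.ofFinite _
  set B := (Fintype.card ι).nthRoot I.index
  let toQuotient (v : ι → Fin (B + 1)) : A ⧸ I :=
    QuotientAddGroup.mk (b.equivFun.symm fun i => (v i : ℤ))
  have hcard : Fintype.card (A ⧸ I) < Fintype.card (ι → Fin (B + 1)) := by
    rw [← Nat.card_eq_fintype_card, ← AddSubgroup.index_eq_card]
    simpa using Nat.lt_pow_nthRoot_add_one Fintype.card_ne_zero I.index
  obtain ⟨v, w, hvw, hquot⟩ := Fintype.exists_ne_map_eq_of_card_lt toQuotient hcard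
  have hmem := QuotientAddGroup.eq.1 hquot
  rw [neg_add_eq_sub, ← map_sub] at hmem
  refine ⟨_, hmem, fun hzero => hvw ?_, fun i => ?_⟩
  · rw [LinearEquiv.map_eq_zero_iff, sub_eq_zero] at hzero
    ext i
    exact_mod_cast (congrFun hzero i).symm
  · rw [← Nat.le_nthRoot_iff Fintype.card_ne_zero, ← b.equivFun_apply,
      LinearEquiv.apply_symm_apply, Pi.sub_apply]
    omega

lemma encard_natAbs_repr_pow_le [Nonempty ι] (b : Basis ι ℤ A) {N : ℕ} (hN : N ≠ 0) :
    {x : A | ∀ i, (b.repr x i).natAbs ^ Fintype.card ι ≤ N}.encard ≤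
      (3 ^ Fintype.card ι * N : ℕ) := by
  classical
  have hι : Fintype.card ι ≠ 0 := Fintype.card_ne_zero
  set d := Fintype.card ι
  let box : Finset (ι → ℤ) := Finset.Icc (fun _ => -(d.nthRoot N : ℤ)) fun _ => d.nthRoot N
  have hmaps : Set.MapsTo b.equivFun {x : A | ∀ i, (b.repr x i).natAbs ^ d ≤ N} box := by
    intro x hx
    have hroot (i : ι) : (b.repr x i).natAbs ≤ d.nthRoot N := (Nat.le_nthRoot_iff hι).2 (hx i)
    simp only [box, Finset.coe_Icc, Set.mem_Icc, Pi.le_def, b.equivFun_apply, ← forall_and]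
    intro i
    have := hroot i
    omega
  have hroot : 1 ≤ d.nthRoot N := by
    rw [Nat.le_nthRoot_iff hι, one_pow]
    exact Nat.one_le_iff_ne_zero.2 hN
  have hbox : box.card ≤ 3 ^ d * N :=
    calc box.card = (2 * d.nthRoot N + 1) ^ d := by
          rw [Pi.card_Icc, Finset.prod_const, Int.card_Icc, Finset.card_univ]
          congr 1
          omega
      _ ≤ (3 * d.nthRoot N) ^ d := by gcongr; omega
      _ = 3 ^ d * d.nthRoot N ^ d := mul_pow ..
      _ ≤ 3 ^ d * N := by gcongr; exact Nat.pow_nthRoot_le (.inl hι)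
  calc {x : A | ∀ i, (b.repr x i).natAbs ^ d ≤ N}.encard
      ≤ (box : Set (ι → ℤ)).encard :=
        Set.encard_le_encard_of_injOn hmaps b.equivFun.injective.injOn
    _ ≤ (3 ^ d * N : ℕ) := by
        rw [Set.encard_coe_eq_coe_finsetCard]
        exact_mod_cast hbox

lemma finite_Ici_of_index_ne_zero {S : Type*} [Ring S] [Module S A] {P : Submodule S A}
    (hP : P.toAddSubgroup.index ≠ 0) : (Set.Ici P).Finite := by
  have : P.toAddSubgroup.FiniteIndex := ⟨hP⟩
  have : Finite (A ⧸ P) := inferInstanceAs (Finite (A ⧸ P.toAddSubgroup))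
  have : Finite (Submodule S (A ⧸ P)) := Finite.of_injective _ SetLike.coe_injective
  exact Finite.of_equiv _ (Submodule.comapMkQRelIso P).toEquiv

lemma factorial_nsmul_mem_of_index_le {J I : AddSubgroup A}
    (hle : J ≤ I) (hJ : J.index ≠ 0) {C : ℕ} (hC : J.index ≤ C * I.index) {y : A} (hy : y ∈ I) :
    C.factorial • y ∈ J := by
  rw [← AddSubgroup.relIndex_mul_index hle] at hJ hC
  have hrel : J.relIndex I ≤ C :=
    Nat.le_of_mul_le_mul_right hC (Nat.pos_of_ne_zero (right_ne_zero_of_mul hJ))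
  exact (AddSubgroup.nsmul_mem_of_relIndex_ne_zero_of_dvd (left_ne_zero_of_mul hJ) hy
    fun k hk hkle => Nat.dvd_factorial hk (hkle.trans hrel)).1

end Lattice

section RightIdeals

open Module
open scoped Pointwise

lemma exists_smul_eq_smul_of_commute {R : Type*} [Ring R] {m x : R} (hmx : Commute m x)
    {I : Submodule Rᵐᵒᵖ R} (hx : x ∈ I) (hI : m • I ≤ x • (⊤ : Submodule Rᵐᵒᵖ R)) :
    ∃ K : Submodule Rᵐᵒᵖ R, m • ⊤ ≤ K ∧ m • I = x • K := by
  refine ⟨(m • I).comap (DistribSMul.toLinearMap Rᵐᵒᵖ R x), ?_, ?_⟩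
  · rintro _ ⟨r, -, rfl⟩
    refine ⟨x * r, I.smul_mem (MulOpposite.op r) hx, ?_⟩
    simp [← mul_assoc, hmx.eq]
  · refine (Submodule.map_comap_eq_self ?_).symm
    rwa [← Submodule.map_top]

variable {R ι : Type*} [Ring R] [IsDomain R] [Fintype ι]

lemma smul_submodule_injective {m : R} (hm : m ≠ 0) :
    Function.Injective fun I : Submodule Rᵐᵒᵖ R => m • I :=
  Submodule.map_injective_of_injective (mul_right_injective₀ hm)

lemma index_smul_top [Module.Free ℤ R] [Module.Finite ℤ R] {x : R} (hx : x ≠ 0) :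
    (x • (⊤ : Submodule Rᵐᵒᵖ R)).toAddSubgroup.index = (Algebra.norm ℤ x).natAbs := by
  rw [Algebra.norm_apply, ← index_range_eq_natAbs_det (f := Algebra.lmul ℤ R x)
    (mul_right_injective₀ hx)]
  congr 1
  ext y
  simp [AddSubgroup.mem_smul_pointwise_iff_exists]

lemma index_smul_top_ne_zero [Module.Free ℤ R] [Module.Finite ℤ R] {x : R} (hx : x ≠ 0) :
    (x • (⊤ : Submodule Rᵐᵒᵖ R)).toAddSubgroup.index ≠ 0 := by
  rw [index_smul_top hx, Int.natAbs_ne_zero]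
  exact Algebra.norm_ne_zero_iff.2 hx

lemma exists_mem_index_smul_top_le (b : Basis ι ℤ R) :
    ∃ C : ℕ, ∀ I : Submodule Rᵐᵒᵖ R, I.toAddSubgroup.index ≠ 0 →
      ∃ x ∈ I, x ≠ 0 ∧
        (∀ i, (b.repr x i).natAbs ^ Fintype.card ι ≤ I.toAddSubgroup.index) ∧
        (x • (⊤ : Submodule Rᵐᵒᵖ R)).toAddSubgroup.index ≤ C * I.toAddSubgroup.index := by
  have : Module.Free ℤ R := .of_basis b
  have : Module.Finite ℤ R := .of_basis b
  have : Nonempty ι := b.index_nonempty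
  have hι : Fintype.card ι ≠ 0 := Fintype.card_ne_zero
  set d := Fintype.card ι
  obtain ⟨C, hC⟩ := exists_forall_abv_norm_le b AbsoluteValue.abs
  refine ⟨C.toNat, fun I hI => ?_⟩
  obtain ⟨x, hxI, hx, hxrepr⟩ := exists_mem_ne_zero_natAbs_repr_pow_le b hI
  set n := I.toAddSubgroup.index
  refine ⟨x, hxI, hx, hxrepr, ?_⟩
  have hroot (i : ι) : |b.repr x i| ≤ d.nthRoot n := by
    rw [Int.abs_eq_natAbs]
    exact_mod_cast (Nat.le_nthRoot_iff hι).2 (hxrepr i)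
  rw [index_smul_top hx]
  zify
  calc |Algebra.norm ℤ x| ≤ C * (d.nthRoot n : ℤ) ^ d := hC x _ hroot
    _ ≤ C.toNat * (d.nthRoot n : ℤ) ^ d := by gcongr; exact Int.self_le_toNat C
    _ ≤ C.toNat * n := by gcongr; exact_mod_cast Nat.pow_nthRoot_le (.inl hι)

lemma exists_smul_eq_smul_of_index_ne_zero (b : Basis ι ℤ R) :
    ∃ m : ℕ, m ≠ 0 ∧ ∀ I : Submodule Rᵐᵒᵖ R, I.toAddSubgroup.index ≠ 0 →
      ∃ (x : R) (K : Submodule Rᵐᵒᵖ R),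
        (∀ i, (b.repr x i).natAbs ^ Fintype.card ι ≤ I.toAddSubgroup.index) ∧
        (m : R) • ⊤ ≤ K ∧ (m : R) • I = x • K := by
  have : Module.Free ℤ R := .of_basis b
  have : Module.Finite ℤ R := .of_basis b
  obtain ⟨C, hC⟩ := exists_mem_index_smul_top_le b
  refine ⟨C.factorial, C.factorial_ne_zero, fun I hI => ?_⟩
  obtain ⟨x, hxI, hx, hxrepr, hindex⟩ := hC I hI
  have hle : x • (⊤ : Submodule Rᵐᵒᵖ R) ≤ I := by
    rintro _ ⟨r, -, rfl⟩
    exact I.smul_mem (MulOpposite.op r) hxI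
  have hsmul : (C.factorial : R) • I ≤ x • (⊤ : Submodule Rᵐᵒᵖ R) := by
    rintro _ ⟨y, hy, rfl⟩
    have hmem := factorial_nsmul_mem_of_index_le hle (index_smul_top_ne_zero hx) hindex hy
    rwa [nsmul_eq_mul] at hmem
  obtain ⟨K, hK, hIK⟩ := exists_smul_eq_smul_of_commute (Nat.cast_commute _ x) hxI hsmul
  exact ⟨x, K, hxrepr, hK, hIK⟩

/-- The right ideals of `R` of finite index at most `N`, counted by the partial sums of the
coefficients of the Hey zeta function. Infinite index is excluded by `index ≠ 0`. -/
def rightIdealsOfIndexLE (R : Type*) [Ring R] (N : ℕ) : Set (Submodule Rᵐᵒᵖ R) :=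
  {I | I.toAddSubgroup.index ≠ 0 ∧ I.toAddSubgroup.index ≤ N}

lemma rightIdealsOfIndexLE_zero (R : Type*) [Ring R] : rightIdealsOfIndexLE R 0 = ∅ :=
  Set.eq_empty_of_forall_notMem fun _ hI => hI.1 (Nat.le_zero.1 hI.2)

theorem exists_encard_rightIdealsOfIndexLE_le (R : Type*) [Ring R] [IsDomain R] [CharZero R]
    [Module.Finite ℤ R] : ∃ c : ℕ, ∀ N, (rightIdealsOfIndexLE R N).encard ≤ (c * N : ℕ) := by
  let b := Module.Free.chooseBasis ℤ R
  set d := Fintype.card (Module.Free.ChooseBasisIndex ℤ R)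
  have : Nonempty (Module.Free.ChooseBasisIndex ℤ R) := b.index_nonempty
  obtain ⟨m, hm, hmI⟩ := exists_smul_eq_smul_of_index_ne_zero b
  have hmR : (m : R) ≠ 0 := Nat.cast_ne_zero.2 hm
  set above : Set (Submodule Rᵐᵒᵖ R) := Set.Ici ((m : R) • ⊤)
  have habove : above.Finite := finite_Ici_of_index_ne_zero (index_smul_top_ne_zero hmR)
  refine ⟨3 ^ d * above.ncard, fun N => ?_⟩
  obtain rfl | hN := eq_or_ne N 0
  · simp [rightIdealsOfIndexLE_zero]
  let small : Set R := {x | ∀ i, (b.repr x i).natAbs ^ d ≤ N}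
  have hsubset : (fun I => (m : R) • I) '' rightIdealsOfIndexLE R N ⊆
      (fun p : R × Submodule Rᵐᵒᵖ R => p.1 • p.2) '' (small ×ˢ above) := by
    rintro _ ⟨I, ⟨hI, hIN⟩, rfl⟩
    obtain ⟨x, K, hx, hK, hIK⟩ := hmI I hI
    exact ⟨(x, K), ⟨fun i => (hx i).trans hIN, hK⟩, hIK.symm⟩
  calc (rightIdealsOfIndexLE R N).encard
      = ((fun I => (m : R) • I) '' rightIdealsOfIndexLE R N).encard :=
        ((smul_submodule_injective hmR).encard_image _).symm
    _ ≤ (small ×ˢ above).encard := (Set.encard_le_encard hsubset).trans (Set.encard_image_le _ _)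
    _ = small.encard * above.ncard := by rw [Set.encard_prod, habove.cast_ncard_eq]
    _ ≤ (3 ^ d * N : ℕ) * above.ncard := by gcongr; exact encard_natAbs_repr_pow_le b hN
    _ = (3 ^ d * above.ncard * N : ℕ) := by norm_cast; rw [mul_right_comm]

end RightIdeals

section LinearCount

open Finset

lemma sum_filter_le_succ {α β : Type*} [AddCommMonoid β] (S : Finset α) (n : α → ℕ) (f : α → β)
    (N : ℕ) :
    ∑ a ∈ S with n a ≤ N + 1, f a = ∑ a ∈ S with n a ≤ N, f a + ∑ a ∈ S with n a = N + 1, f a := by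
  classical
  have hdisj : Disjoint ({a ∈ S | n a ≤ N} : Finset α) {a ∈ S | n a = N + 1} :=
    disjoint_filter.2 fun a _ hle heq => by omega
  rw [← sum_union hdisj, ← filter_or]
  simp only [Nat.le_succ_iff, Nat.succ_eq_add_one]

variable {α : Type*} {S : Finset α} {n : α → ℕ} {c : ℝ}

lemma sum_comp_le_mul_sum_Icc_of_card_filter_le {w : ℕ → ℝ} (hw : AntitoneOn w (Set.Ici 1))
    (hcard : ∀ j : ℕ, (#{a ∈ S | n a ≤ j} : ℝ) ≤ c * j) (hw₀ : ∀ j, 0 ≤ w j) (N : ℕ) :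
    ∑ a ∈ S with n a ≤ N, w (n a) ≤ c * ∑ j ∈ Icc 1 N, w j := by
  -- Keeping the slack in `hcard`, weighted by the next value of `w`, is summation by parts.
  suffices hslack : ∑ a ∈ S with n a ≤ N, w (n a) + w (N + 1) * (c * N - #{a ∈ S | n a ≤ N}) ≤
      c * ∑ j ∈ Icc 1 N, w j by
    have := mul_nonneg (hw₀ (N + 1)) (sub_nonneg.2 (hcard N))
    linarith
  induction N with
  | zero =>
    have hempty : ({a ∈ S | n a ≤ 0} : Finset α) = ∅ := by
      simpa only [Nat.cast_zero, mul_zero, Nat.cast_nonpos, card_eq_zero] using hcard 0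
    rw [hempty]
    simp
  | succ N ih =>
    have hsum : ∑ a ∈ S with n a ≤ N + 1, w (n a) =
        ∑ a ∈ S with n a ≤ N, w (n a) + #{a ∈ S | n a = N + 1} * w (N + 1) := by
      rw [sum_filter_le_succ, sum_congr rfl fun a ha => congrArg w (mem_filter.1 ha).2, sum_const,
        nsmul_eq_mul]
    have hcount : (#{a ∈ S | n a ≤ N + 1} : ℝ) =
        #{a ∈ S | n a ≤ N} + #{a ∈ S | n a = N + 1} := by
      simpa using sum_filter_le_succ S n (fun _ => (1 : ℝ)) N
    have hanti : w (N + 2) * (c * (N + 1 : ℕ) - #{a ∈ S | n a ≤ N + 1}) ≤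
        w (N + 1) * (c * (N + 1 : ℕ) - #{a ∈ S | n a ≤ N + 1}) :=
      mul_le_mul_of_nonneg_right (hw (by simp) (by simp) (by simp)) (sub_nonneg.2 (hcard _))
    rw [hsum, sum_Icc_succ_top (by simp), mul_add]
    rw [hcount] at hanti ⊢
    push_cast at hanti ⊢
    linarith

lemma sum_one_div_rpow_le_mul_one_add_log (hcard : ∀ j : ℕ, (#{a ∈ S | n a ≤ j} : ℝ) ≤ c * j)
    {s : ℝ} (hs : 1 ≤ s) {M : ℝ} (hM : 1 ≤ M) (hnM : ∀ a ∈ S, (n a : ℝ) ≤ M) :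
    ∑ a ∈ S, 1 / (n a : ℝ) ^ s ≤ c * (1 + Real.log M) := by
  have hpos : ∀ a ∈ S, 0 < n a := by
    have hempty : ∀ a ∈ S, n a ≠ 0 := by simpa [filter_eq_empty_iff] using hcard 0
    exact fun a ha => Nat.pos_of_ne_zero (hempty a ha)
  have hc : 0 ≤ c := by simpa using (Nat.cast_nonneg _).trans (hcard 1)
  have hanti : AntitoneOn (fun j : ℕ => (j : ℝ)⁻¹) (Set.Ici 1) := fun i hi j _ hij => by
    have : (0 : ℝ) < i := by exact_mod_cast hi
    dsimp only
    gcongr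
  calc ∑ a ∈ S, 1 / (n a : ℝ) ^ s ≤ ∑ a ∈ S, (n a : ℝ)⁻¹ := by
        refine sum_le_sum fun a ha => ?_
        have hone : (1 : ℝ) ≤ n a := by exact_mod_cast hpos a ha
        rw [one_div]
        gcongr
        exact Real.self_le_rpow_of_one_le hone hs
    _ = ∑ a ∈ S with n a ≤ ⌊M⌋₊, (n a : ℝ)⁻¹ := by
        rw [filter_true_of_mem fun a ha => Nat.le_floor (hnM a ha)]
    _ ≤ c * ∑ j ∈ Icc 1 ⌊M⌋₊, (j : ℝ)⁻¹ :=
        sum_comp_le_mul_sum_Icc_of_card_filter_le hanti hcard (fun j => by positivity) _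
    _ = c * harmonic ⌊M⌋₊ := by rw [harmonic_eq_sum_Icc]; push_cast; rfl
    _ ≤ c * (1 + Real.log M) := by
        gcongr
        exact harmonic_floor_le_one_add_log M hM

end LinearCount

theorem truncated_hey_zeta_bound_general (R : Type*) [Ring R] [IsDomain R] [CharZero R]
    [Module.Finite ℤ R] {s : ℝ} (hs : 1 ≤ s) :
    ∃ C : ℝ, ∀ M : ℝ, 2 ≤ M → ∀ S : Finset (Submodule Rᵐᵒᵖ R),
      (∀ I ∈ S, 0 < I.toAddSubgroup.index ∧ (I.toAddSubgroup.index : ℝ) ≤ M) →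
      ∑ I ∈ S, 1 / (I.toAddSubgroup.index : ℝ) ^ s ≤ C * Real.log M := by
  obtain ⟨c, hc⟩ := exists_encard_rightIdealsOfIndexLE_le R
  refine ⟨c * (1 / Real.log 2 + 1), fun M hM S hS => ?_⟩
  have hcard (j : ℕ) : (({I ∈ S | I.toAddSubgroup.index ≤ j} : Finset _).card : ℝ) ≤ c * j := by
    have hsubset : (({I ∈ S | I.toAddSubgroup.index ≤ j} : Finset _) : Set (Submodule Rᵐᵒᵖ R)) ⊆
        rightIdealsOfIndexLE R j := fun I hI =>
      ⟨(hS I (Finset.mem_filter.1 hI).1).1.ne', (Finset.mem_filter.1 hI).2⟩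
    have hle := (Set.encard_le_encard hsubset).trans (hc j)
    rw [Set.encard_coe_eq_coe_finsetCard] at hle
    exact_mod_cast hle
  have hone : 1 ≤ 1 / Real.log 2 * Real.log M := by
    rw [one_div_mul_eq_div, one_le_div (Real.log_pos one_lt_two)]
    gcongr
  calc ∑ I ∈ S, 1 / (I.toAddSubgroup.index : ℝ) ^ s
      ≤ c * (1 + Real.log M) :=
        sum_one_div_rpow_le_mul_one_add_log hcard hs (by linarith) fun I hI => (hS I hI).2
    _ ≤ c * (1 / Real.log 2 * Real.log M + Real.log M) := by gcongr
    _ = c * (1 / Real.log 2 + 1) * Real.log M := by ring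

/-- Let `D` be a central division algebra of index `k` over a number field `F` (so
`dim_F D = k²` and the center of `D` is `F`), and let `Λ` be a maximal order in `D`.
Then for any real `s ≥ 1` the truncated Hey zeta sum over finite-index right ideals `I` of
`Λ` with `[Λ:I] ≤ M` is bounded by `N·(log M)^T` for constants `N, T` independent of `M`. -/
theorem truncated_hey_zeta_bound (F : Type) [Field F] [NumberField F]
    (D : Type) [DivisionRing D] [Algebra F D] [FiniteDimensional F D]
    (k : ℕ) (hk : 0 < k) (hdim : Module.finrank F D = k ^ 2)
    (hcentral : Subalgebra.center F D = ⊥)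
    (Λ : Subring D) (hfg : Module.Finite ℤ ↥Λ)
    (hspan : Submodule.span F (Λ : Set D) = ⊤)
    (hmax : ∀ Λ' : Subring D, Module.Finite ℤ ↥Λ' →
      Submodule.span F ((Λ' : Set D)) = ⊤ → Λ ≤ Λ' → Λ' = Λ)
    (s : ℝ) (hs : 1 ≤ s) :
    ∃ N T : ℝ, ∀ M : ℝ, 2 ≤ M → ∀ S : Finset (Submodule (↥Λ)ᵐᵒᵖ ↥Λ),
      (∀ I ∈ S, 0 < (Submodule.toAddSubgroup I).index ∧
        ((Submodule.toAddSubgroup I).index : ℝ) ≤ M) →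
      ∑ I ∈ S, 1 / ((Submodule.toAddSubgroup I).index : ℝ) ^ s
        ≤ N * Real.log M ^ T := by
  have : CharZero D := charZero_of_injective_algebraMap (algebraMap F D).injective
  obtain ⟨C, hC⟩ := truncated_hey_zeta_bound_general Λ hs
  exact ⟨C, 1, by simpa only [Real.rpow_one] using hC⟩
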